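/- Let (p_i, ρ_i)_{i=1}^m be a linearly independent (LI) ensemble on ℂ^n with r_i = rank ρ_i, and let ψ_{ij} ∈ ℂ^n (1 ≤ i ≤ m, 1 ≤ j ≤ r_i) be vectors forming a basis of ℂ^n with p_iρ_i = ∑_{j=1}^{r_i} ψ_{ij}ψ_{ij}* for each i. Let G be the n×n Gram matrix of the ψ_{ij} (entries ⟨ψ_{i₁j₁}, ψ_{i₂j₂}⟩, conjugate-linear in the first argument, indices ordered by groups i), let G^{1/2} be its positive definite square root, and let H^{(ii)} denote the i-th r_i×r_i diagonal block of G^{1/2}. Define χ_{ij} = ∑_{k=1}^{r_i} (H^{(ii)})_{kj} ψ_{ik}, N = ∑_{i,j} ‖χ_{ij}‖², and the matrices T_i = (1/N) ∑_{j=1}^{r_i} χ_{ij}χ_{ij}*. Then T_i = p_iρ_i for all i if and only if there exists λ > 0 with H^{(ii)} = λ·I_{r_i} for every i (equivalently, all eigenvalues of all the diagonal blocks of G^{1/2} are equal); and in that case the pretty good measurement of (p_i, ρ_i) is an optimal POVM for its minimum error discrimination. -/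

import Mathlib

open Matrix
open scoped ComplexOrder

noncomputable section

/-- Rank-one outer product `x x*` as an `n × n` complex matrix. -/
def outer {n : ℕ} (x : Fin n → ℂ) : Matrix (Fin n) (Fin n) ℂ :=
  Matrix.vecMulVec x (star x)

/-- A POVM indexed by `ι`: positive semidefinite elements summing to the identity. -/
def IsPOVM {ι : Type} [Fintype ι] {n : ℕ} (E : ι → Matrix (Fin n) (Fin n) ℂ) : Prop :=
  (∀ i, (E i).PosSemidef) ∧ ∑ i, E i = 1

/-- Success probability of the POVM `E` for the ensemble `(p, ρ)`. -/
def succProb {ι : Type} [Fintype ι] {n : ℕ} (p : ι → ℝ)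
    (ρ E : ι → Matrix (Fin n) (Fin n) ℂ) : ℝ :=
  ∑ i, p i * ((ρ i * E i).trace).re

/-- `P` is a POVM maximizing the success probability for the ensemble `(p, ρ)`. -/
def IsOptimal {ι : Type} [Fintype ι] {n : ℕ} (p : ι → ℝ)
    (ρ P : ι → Matrix (Fin n) (Fin n) ℂ) : Prop :=
  IsPOVM P ∧ ∀ E, IsPOVM E → succProb p ρ E ≤ succProb p ρ P

/-- An ensemble of states: positive probabilities summing to 1, states positive
semidefinite of trace 1. -/
def IsEnsemble {ι : Type} [Fintype ι] {n : ℕ} (p : ι → ℝ)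
    (ρ : ι → Matrix (Fin n) (Fin n) ℂ) : Prop :=
  (∀ i, 0 < p i) ∧ ∑ i, p i = 1 ∧ (∀ i, (ρ i).PosSemidef) ∧ ∀ i, (ρ i).trace = 1

/-- A linearly independent (LI) ensemble: the ranks sum to `n` and the column spaces
of the states together span `ℂ^n`. -/
def IsLIEnsemble {ι : Type} [Fintype ι] {n : ℕ} (p : ι → ℝ)
    (ρ : ι → Matrix (Fin n) (Fin n) ℂ) : Prop :=
  IsEnsemble p ρ ∧ (∑ i, (ρ i).rank = n) ∧
    (⨆ i, LinearMap.range (ρ i).mulVecLin) = ⊤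

/-- A projective measurement: mutually orthogonal Hermitian idempotents summing to
the identity. -/
def IsProjectiveMeasurement {ι : Type} [Fintype ι] {n : ℕ}
    (P : ι → Matrix (Fin n) (Fin n) ℂ) : Prop :=
  (∀ i j, i ≠ j → P i * P j = 0) ∧ (∀ i, P i * P i = P i) ∧
    (∀ i, (P i).IsHermitian) ∧ ∑ i, P i = 1

/-- The pretty good measurement of the ensemble `(q, σ)` (with elements
`S^{-1/2} qᵢσᵢ S^{-1/2}`, `S = ∑ qⱼσⱼ`, `S^{1/2}` the unique positive definite square
root of `S`) is an optimal POVM for the minimum error discrimination of `(p, ρ)`. -/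
def PGMIsOptimal {m n : ℕ} (q : Fin m → ℝ) (σ : Fin m → Matrix (Fin n) (Fin n) ℂ)
    (p : Fin m → ℝ) (ρ : Fin m → Matrix (Fin n) (Fin n) ℂ) : Prop :=
  ∀ R : Matrix (Fin n) (Fin n) ℂ, R.PosDef → R * R = ∑ j, (q j : ℂ) • σ j →
    IsOptimal p ρ (fun i => R⁻¹ * ((q i : ℂ) • σ i) * R⁻¹)

/-- Uniqueness of positive semidefinite square roots. -/
theorem psd_sqrt_unique {κ : Type*} [Fintype κ] [DecidableEq κ] {A B : Matrix κ κ ℂ}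
    (hA : A.PosSemidef) (hB : B.PosSemidef) (h : A * A = B * B) : A = B := by
  open scoped MatrixOrder in
  rw [← CFC.sqrt_mul_self A hA.nonneg, ← CFC.sqrt_mul_self B hB.nonneg, h]

/-- The trace of a product of positive semidefinite matrices is nonnegative. -/
theorem psd_trace_mul_nonneg {κ : Type*} [Fintype κ] [DecidableEq κ] {A B : Matrix κ κ ℂ}
    (hA : A.PosSemidef) (hB : B.PosSemidef) : 0 ≤ ((A * B).trace).re := by
  open scoped MatrixOrder in
  obtain ⟨C, rfl⟩ := CStarAlgebra.nonneg_iff_eq_star_mul_self.mp hB.nonneg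
  have h := (hA.mul_mul_conjTranspose_same C).trace_nonneg
  rw [← Matrix.mul_assoc, Matrix.trace_mul_comm, ← Matrix.mul_assoc]
  exact (Complex.le_def.1 h).1

theorem sum_outer_eq {n k : ℕ} (v : Fin k → Fin n → ℂ) :
    ∑ j, outer (v j) = (Matrix.of fun x j => v j x) * (Matrix.of fun x j => v j x)ᴴ := by
  ext a b
  simp [outer, Matrix.sum_apply, Matrix.mul_apply, Matrix.vecMulVec_apply]

theorem re_trace_outer {n : ℕ} (v : Fin n → ℂ) :
    (outer v).trace = star v ⬝ᵥ v := by
  simp [outer, Matrix.trace_vecMulVec, dotProduct_comm]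

/-- The optimality criterion for the pretty good measurement. -/
theorem pgm_opt {m n : ℕ} (p : Fin m → ℝ) (ρ : Fin m → Matrix (Fin n) (Fin n) ℂ)
    (W : Fin m → Matrix (Fin n) (Fin n) ℂ) (hW : ∀ i, (p i : ℂ) • ρ i = W i)
    (hWp : ∀ i, (W i).PosSemidef)
    (R : Matrix (Fin n) (Fin n) ℂ) (hR : R.PosDef) (hRR : R * R = ∑ j, W j)
    (lam : ℝ) (hlam : 0 < lam)
    (hkey : ∀ i, W i * R⁻¹ * W i = (lam : ℂ) • W i) :
    IsOptimal p ρ (fun i => R⁻¹ * W i * R⁻¹) := by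
  have hu : IsUnit R.det := (Matrix.isUnit_iff_isUnit_det _).1 hR.isUnit
  have h1 : R * R⁻¹ = 1 := Matrix.mul_nonsing_inv _ hu
  have h2 : R⁻¹ * R = 1 := Matrix.nonsing_inv_mul _ hu
  have hRi : (R⁻¹)ᴴ = R⁻¹ := hR.inv.isHermitian
  have hRh : Rᴴ = R := hR.isHermitian
  have hlc : (lam : ℂ) ≠ 0 := by exact_mod_cast hlam.ne'
  have hs : ∀ E : Fin m → Matrix (Fin n) (Fin n) ℂ,
      succProb p ρ E = ∑ i, ((W i * E i).trace).re := by
    intro E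
    refine Finset.sum_congr rfl fun i _ => ?_
    rw [← hW i, Matrix.smul_mul, Matrix.trace_smul, smul_eq_mul, Complex.re_ofReal_mul]
  have hval : ∀ E : Fin m → Matrix (Fin n) (Fin n) ℂ, ∑ i, E i = 1 →
      ∑ i, ((((lam : ℂ) • R) * E i).trace).re = lam * (R.trace).re := by
    intro E hE
    rw [← Complex.re_sum, ← Matrix.trace_sum, ← Finset.mul_sum, hE, Matrix.mul_one,
      Matrix.trace_smul, smul_eq_mul, Complex.re_ofReal_mul]
  have hsum : ∑ i, R⁻¹ * W i * R⁻¹ = 1 := by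
    rw [← Finset.sum_mul, ← Finset.mul_sum, ← hRR, ← Matrix.mul_assoc, h2, Matrix.one_mul, h1]
  have hpovm : IsPOVM (fun i => R⁻¹ * W i * R⁻¹) := by
    refine ⟨fun i => ?_, hsum⟩
    have := (hWp i).mul_mul_conjTranspose_same R⁻¹
    rwa [hRi] at this
  refine ⟨hpovm, fun E hE => ?_⟩
  have hle : succProb p ρ E ≤ lam * (R.trace).re := by
    rw [hs, ← hval E hE.2]
    refine Finset.sum_le_sum fun i _ => ?_
    have hpsd : ((lam : ℂ) • R - W i).PosSemidef := by
      have hc := hR.posSemidef.mul_mul_conjTranspose_same ((lam : ℂ) • 1 - W i * R⁻¹)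
      have he : ((lam : ℂ) • 1 - W i * R⁻¹) * R * ((lam : ℂ) • 1 - W i * R⁻¹)ᴴ
          = (lam : ℂ) • ((lam : ℂ) • R - W i) := by
        have hWh : (W i)ᴴ = W i := (hWp i).isHermitian
        have e1 : ((lam : ℂ) • 1 - W i * R⁻¹)ᴴ = (lam : ℂ) • 1 - R⁻¹ * W i := by
          simp [Matrix.conjTranspose_sub, Matrix.conjTranspose_smul, Matrix.conjTranspose_mul,
            hRi, hWh]
        have e2 : ((lam : ℂ) • 1 - W i * R⁻¹) * R = (lam : ℂ) • R - W i := by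
          rw [Matrix.sub_mul, Matrix.mul_assoc, h2]; simp
        have e3 : R * (R⁻¹ * W i) = W i := by rw [← Matrix.mul_assoc, h1, Matrix.one_mul]
        rw [e1, e2, Matrix.mul_sub, Matrix.sub_mul, Matrix.sub_mul, Matrix.smul_mul,
          Matrix.smul_mul, e3, ← Matrix.mul_assoc, hkey i]
        simp [smul_sub]
      rw [he] at hc
      have h3 := hc.smul (a := ((lam⁻¹ : ℝ) : ℂ)) (by
        rw [Complex.zero_le_real]; positivity)
      rwa [smul_smul, ← Complex.ofReal_mul, inv_mul_cancel₀ hlam.ne', Complex.ofReal_one,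
        one_smul] at h3
    have h4 := psd_trace_mul_nonneg hpsd (hE.1 i)
    rw [Matrix.sub_mul, Matrix.trace_sub, Complex.sub_re] at h4
    linarith
  refine hle.trans (le_of_eq ?_)
  rw [hs, ← hval _ hsum]
  refine Finset.sum_congr rfl fun i _ => ?_
  have e : W i * (R⁻¹ * W i * R⁻¹) = (lam : ℂ) • (W i * R⁻¹) := by
    rw [← Matrix.mul_assoc, ← Matrix.mul_assoc, hkey i, Matrix.smul_mul]
  rw [e, Matrix.smul_mul, ← Matrix.mul_assoc, ← Matrix.mul_assoc, h1, Matrix.one_mul]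

/-- With `χᵢⱼ = ∑ₖ (H⁽ⁱⁱ⁾)ₖⱼ ψᵢₖ`, `N = ∑ ‖χᵢⱼ‖²` and `Tᵢ = (1/N) ∑ⱼ χᵢⱼχᵢⱼ*`:
`Tᵢ = pᵢρᵢ` for all `i` iff all diagonal blocks of `G^{1/2}` equal `λ·I` for some
`λ > 0`; and in that case the PGM of `(p, ρ)` is optimal for its MED. -/
theorem stmt_19 {m n : ℕ} (p : Fin m → ℝ) (ρ : Fin m → Matrix (Fin n) (Fin n) ℂ)
    (hens : IsLIEnsemble p ρ)
    (r : Fin m → ℕ) (hr : ∀ i, (ρ i).rank = r i)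
    (ψ : ((i : Fin m) × Fin (r i)) → (Fin n → ℂ))
    (hli : LinearIndependent ℂ ψ) (hsp : Submodule.span ℂ (Set.range ψ) = ⊤)
    (hdec : ∀ i, (p i : ℂ) • ρ i = ∑ j : Fin (r i), outer (ψ ⟨i, j⟩))
    (G : Matrix ((i : Fin m) × Fin (r i)) ((i : Fin m) × Fin (r i)) ℂ)
    (hG : ∀ a b, G a b = star (ψ a) ⬝ᵥ ψ b)
    (RG : Matrix ((i : Fin m) × Fin (r i)) ((i : Fin m) × Fin (r i)) ℂ)
    (hRG : RG.PosDef) (hRG2 : RG * RG = G)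
    (χ : ((i : Fin m) × Fin (r i)) → (Fin n → ℂ))
    (hχ : ∀ (i : Fin m) (j : Fin (r i)),
      χ ⟨i, j⟩ = ∑ k : Fin (r i), RG ⟨i, k⟩ ⟨i, j⟩ • ψ ⟨i, k⟩)
    (N : ℝ) (hN : N = ∑ a, (star (χ a) ⬝ᵥ χ a).re)
    (T : Fin m → Matrix (Fin n) (Fin n) ℂ)
    (hT : ∀ i, T i = ((N : ℝ) : ℂ)⁻¹ • ∑ j : Fin (r i), outer (χ ⟨i, j⟩)) :
    ((∀ i, T i = (p i : ℂ) • ρ i) ↔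
      ∃ lam : ℝ, 0 < lam ∧ ∀ (i : Fin m) (a b : Fin (r i)),
        RG ⟨i, a⟩ ⟨i, b⟩ = if a = b then (lam : ℂ) else 0) ∧
    ((∀ i, T i = (p i : ℂ) • ρ i) → PGMIsOptimal p ρ p ρ) := by
  obtain ⟨⟨hp, hp1, hρ, hρ1⟩, -, -⟩ := hens
  set P : (i : Fin m) → Matrix (Fin n) (Fin (r i)) ℂ := fun i => Matrix.of fun x j => ψ ⟨i, j⟩ x
    with hPdef
  set H : (i : Fin m) → Matrix (Fin (r i)) (Fin (r i)) ℂ :=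
    fun i => RG.submatrix (fun j => ⟨i, j⟩) (fun j => ⟨i, j⟩) with hHdef
  have hinj : ∀ i : Fin m, Function.Injective
      (fun j => ⟨i, j⟩ : Fin (r i) → (i : Fin m) × Fin (r i)) := fun i a b hab => by simpa using hab
  have hHp : ∀ i, (H i).PosDef := fun i => hRG.submatrix (hinj i)
  have hHh : ∀ i, (H i)ᴴ = H i := fun i => (hHp i).isHermitian
  have hP : ∀ i, (p i : ℂ) • ρ i = P i * (P i)ᴴ := fun i => by rw [hdec i, sum_outer_eq]
  have hχP : ∀ i, (Matrix.of fun x j => χ ⟨i, j⟩ x) = P i * H i := by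
    intro i
    ext x j
    simp [hχ, hPdef, hHdef, Matrix.mul_apply, Finset.sum_apply, mul_comm]
  have hTP : ∀ i, T i = ((N : ℝ) : ℂ)⁻¹ • (P i * (H i * H i) * (P i)ᴴ) := by
    intro i
    rw [hT i, sum_outer_eq, hχP i, Matrix.conjTranspose_mul, hHh i]
    simp only [Matrix.mul_assoc]
  have hGp : G.PosDef := by
    have := Matrix.PosDef.conjTranspose_mul_self RG
      (Matrix.mulVec_injective_iff_isUnit.mpr hRG.isUnit)
    rwa [hRG.isHermitian.eq, hRG2] at this
  have hgram : ∀ i, (P i)ᴴ * P i = G.submatrix (fun j => ⟨i, j⟩) (fun j => ⟨i, j⟩) := by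
    intro i
    ext a b
    simp [hPdef, Matrix.mul_apply, hG, dotProduct]
  have hGu : ∀ i, IsUnit ((P i)ᴴ * P i) := fun i => by
    rw [hgram i]; exact (hGp.submatrix (hinj i)).isUnit
  have hN0 : 0 ≤ N := by
    rw [hN]
    exact Finset.sum_nonneg fun a _ => (Complex.le_def.1 (dotProduct_star_self_nonneg (χ a))).1
  have hm : 0 < m := by
    rcases Nat.eq_zero_or_pos m with h | h
    · subst h; simp at hp1
    · exact h
  have hscal : (∀ (lam : ℝ), (∀ (i : Fin m) (a b : Fin (r i)),
        RG ⟨i, a⟩ ⟨i, b⟩ = if a = b then (lam : ℂ) else 0) ↔ ∀ i, H i = (lam : ℂ) • 1) := by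
    intro lam
    refine forall_congr' fun i => ?_
    rw [← Matrix.ext_iff]
    simp [hHdef, Matrix.one_apply]
  have hfwd : (∀ i, T i = (p i : ℂ) • ρ i) → ∃ lam : ℝ, 0 < lam ∧ ∀ i, H i = (lam : ℂ) • 1 := by
    intro h
    have hNne : N ≠ 0 := by
      intro h0
      have h1 := h ⟨0, hm⟩
      rw [hT, h0] at h1
      have h2 := congrArg Matrix.trace h1
      simp [Matrix.trace_smul, hρ1] at h2
      exact (hp _).ne (by exact_mod_cast h2)
    have hNpos : 0 < N := lt_of_le_of_ne hN0 (Ne.symm hNne)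
    refine ⟨Real.sqrt N, Real.sqrt_pos.2 hNpos, fun i => ?_⟩
    have h1 := h i
    rw [hTP i, hP i] at h1
    have hNc : ((N : ℝ) : ℂ) ≠ 0 := by exact_mod_cast hNne
    have h2 : P i * (H i * H i) * (P i)ᴴ = ((N : ℝ) : ℂ) • (P i * (P i)ᴴ) := by
      rw [← h1, smul_smul, mul_inv_cancel₀ hNc, one_smul]
    have h3 : ((P i)ᴴ * P i) * (H i * H i) * ((P i)ᴴ * P i)
        = ((P i)ᴴ * P i) * (((N : ℝ) : ℂ) • 1) * ((P i)ᴴ * P i) := by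
      have := congrArg (fun X => (P i)ᴴ * X * P i) h2
      simp only [Matrix.mul_assoc, Matrix.mul_smul, Matrix.smul_mul, Matrix.mul_one,
        Matrix.one_mul] at this ⊢
      exact this
    have h4 := (hGu i).mul_left_cancel ((hGu i).mul_right_cancel h3)
    have hsq : 0 ≤ Real.sqrt N := Real.sqrt_nonneg N
    refine psd_sqrt_unique (hHp i).posSemidef
      (Matrix.PosSemidef.one.smul (by rwa [Complex.zero_le_real])) ?_
    rw [h4, Matrix.smul_mul, Matrix.one_mul, smul_smul, ← Complex.ofReal_mul,
      Real.mul_self_sqrt hN0]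
  have hbwd : ∀ lam : ℝ, 0 < lam → (∀ i, H i = (lam : ℂ) • 1) →
      ∀ i, T i = (p i : ℂ) • ρ i := by
    intro lam hlam h
    have hlc : (lam : ℂ) ≠ 0 := by exact_mod_cast hlam.ne'
    have hHH : ∀ i, P i * (H i * H i) * (P i)ᴴ = (lam * lam : ℂ) • ((p i : ℂ) • ρ i) := by
      intro i
      rw [h i, hP i]
      simp only [Matrix.smul_mul, Matrix.mul_smul, Matrix.mul_one, smul_smul]
    have hNv : N = lam * lam := by
      have e : ∀ i, ∑ j : Fin (r i), star (χ ⟨i, j⟩) ⬝ᵥ χ ⟨i, j⟩ = lam * lam * p i := by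
        intro i
        have := congrArg Matrix.trace (sum_outer_eq fun j => χ ⟨i, j⟩)
        rw [hχP i, Matrix.conjTranspose_mul, hHh i, Matrix.trace_sum] at this
        simp only [re_trace_outer] at this
        rw [this, show P i * H i * (H i * (P i)ᴴ) = P i * (H i * H i) * (P i)ᴴ by
          simp only [Matrix.mul_assoc], hHH i, Matrix.trace_smul, Matrix.trace_smul, hρ1]
        simp
      rw [hN, ← Complex.re_sum, Fintype.sum_sigma, Finset.sum_congr rfl fun i _ => e i,
        ← Finset.mul_sum, ← Complex.ofReal_sum, hp1]
      simp
    intro i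
    rw [hTP i, hHH i, hNv, smul_smul, Complex.ofReal_mul, inv_mul_cancel₀ (mul_ne_zero hlc hlc),
      one_smul]
  refine ⟨⟨fun h => ?_, fun ⟨lam, hl, h⟩ => hbwd lam hl ((hscal lam).1 h)⟩, fun h => ?_⟩
  · obtain ⟨lam, hl, h'⟩ := hfwd h
    exact ⟨lam, hl, (hscal lam).2 h'⟩
  · obtain ⟨lam, hl, h'⟩ := hfwd h
    intro R hR hRR
    have hu : IsUnit R.det := (Matrix.isUnit_iff_isUnit_det _).1 hR.isUnit
    have h1 : R * R⁻¹ = 1 := Matrix.mul_nonsing_inv _ hu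
    have h2 : R⁻¹ * R = 1 := Matrix.nonsing_inv_mul _ hu
    set Ψ : Matrix (Fin n) ((i : Fin m) × Fin (r i)) ℂ := Matrix.of fun x a => ψ a x with hΨ
    have hS : Ψ * Ψᴴ = R * R := by
      rw [hRR]
      simp only [hdec]
      ext a b
      simp [hΨ, outer, Matrix.sum_apply, Matrix.mul_apply, Matrix.vecMulVec_apply,
        Fintype.sum_sigma]
    have hGG : Ψᴴ * Ψ = G := by
      ext a b
      simp [hΨ, Matrix.mul_apply, hG, dotProduct]
    have hX : Ψᴴ * R⁻¹ * Ψ = RG := by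
      refine psd_sqrt_unique (hR.inv.posSemidef.conjTranspose_mul_mul_same Ψ)
        hRG.posSemidef ?_
      rw [hRG2, ← hGG]
      calc Ψᴴ * R⁻¹ * Ψ * (Ψᴴ * R⁻¹ * Ψ) = Ψᴴ * R⁻¹ * (Ψ * Ψᴴ) * R⁻¹ * Ψ := by
            simp only [Matrix.mul_assoc]
        _ = Ψᴴ * (R⁻¹ * R) * (R * R⁻¹) * Ψ := by
            rw [hS]; simp only [Matrix.mul_assoc]
        _ = Ψᴴ * Ψ := by rw [h1, h2]; simp
    have hXi : ∀ i, (P i)ᴴ * R⁻¹ * P i = H i := by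
      intro i
      simp only [hHdef]
      rw [← hX]
      ext a b
      simp [hPdef, hΨ, Matrix.mul_apply]
    refine pgm_opt p ρ (fun i => (p i : ℂ) • ρ i) (fun i => rfl) (fun i => ?_) R hR hRR lam hl
      (fun i => ?_)
    · simp only [hP]
      exact Matrix.posSemidef_self_mul_conjTranspose _
    · simp only [hP]
      calc P i * (P i)ᴴ * R⁻¹ * (P i * (P i)ᴴ) = P i * ((P i)ᴴ * R⁻¹ * P i) * (P i)ᴴ := by
            simp only [Matrix.mul_assoc]
        _ = _ := by rw [hXi i, h' i]; simp
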